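/- Let p be an odd prime. The Haar-measure proportion of monic quartics f(x) = x^4 + c_3 x^3 + c_2 x^2 + c_1 x + c_0 ∈ Z_p[x] with c_3 = 0, v_p(c_2) ≥ 1, v_p(c_1) ≥ 2, v_p(c_0) = 2 (i.e., Newton polygon a single segment from (0,2) to (4,0)) that are irreducible in Z_p[x] equals (p^2 + 3p + 1)/(2p(p+1)). -/

import Mathlib

open MeasureTheory Polynomial

noncomputable instance (p : ℕ) [Fact p.Prime] : MeasurableSpace ℤ_[p] := borel _
instance (p : ℕ) [Fact p.Prime] : BorelSpace ℤ_[p] := ⟨rfl⟩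

section Factorization

/-- The quartic `X⁴ + aX² + bX + c` is irreducible if and only if it has no root and is not a
product of two monic quadratics. -/
lemma irreducible_quartic_iff {R : Type*} [CommRing R] [IsDomain R] (a b c : R) :
    Irreducible (X ^ 4 + C a * X ^ 2 + C b * X + C c) ↔
      (∀ x : R, x ^ 4 + a * x ^ 2 + b * x + c ≠ 0) ∧
        ∀ s t u : R, ¬ (t + u - s ^ 2 = a ∧ s * (u - t) = b ∧ t * u = c) := by
  have hdeg : (X ^ 4 + C a * X ^ 2 + C b * X + C c : R[X]).natDegree = 4 := by compute_degree!
  have hmonic : (X ^ 4 + C a * X ^ 2 + C b * X + C c : R[X]).Monic := by monicity!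
  have hne : (X ^ 4 + C a * X ^ 2 + C b * X + C c : R[X]) ≠ 1 := by
    intro h
    rw [h] at hdeg
    simp at hdeg
  rw [hmonic.irreducible_iff_lt_natDegree_lt hne, hdeg]
  constructor
  · refine fun h => ⟨fun x hx => ?_, fun s t u hstu => ?_⟩
    · refine h (X - C x) (monic_X_sub_C x) (by simp) ?_
      rw [dvd_iff_isRoot]
      simpa using hx
    · obtain ⟨rfl, rfl, rfl⟩ := hstu
      have hq : (X ^ 2 + C s * X + C t : R[X]).natDegree = 2 := by compute_degree!
      refine h (X ^ 2 + C s * X + C t) (by monicity!) (by simp [hq])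
        ⟨X ^ 2 - C s * X + C u, ?_⟩
      simp only [C_sub, C_add, C_mul, C_pow]
      ring
  · rintro ⟨hroot, hquad⟩ q hq hdq ⟨r, hr⟩
    obtain ⟨hpos, hle⟩ := Finset.mem_Ioc.mp hdq
    have hrm : r.Monic := hq.of_mul_monic_left (hr ▸ hmonic)
    have hadd : q.natDegree + r.natDegree = 4 := by
      rw [← hq.natDegree_mul hrm, ← hr, hdeg]
    have hcases : q.natDegree = 1 ∨ q.natDegree = 2 := by omega
    rcases hcases with h1 | h2
    · have hqe : q = X + C (q.coeff 0) := hq.eq_X_add_C h1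
      refine hroot (-q.coeff 0) ?_
      have h0 := congrArg (eval (-q.coeff 0)) hr
      rw [eval_mul, hqe] at h0
      simpa using h0
    · have hr2 : r.natDegree = 2 := by omega
      have hexp : ∀ f : R[X], f.Monic → f.natDegree = 2 →
          f = X ^ 2 + C (f.coeff 1) * X + C (f.coeff 0) := by
        intro f hf hf2
        conv_lhs => rw [hf.as_sum, hf2]
        simp [Finset.sum_range_succ]
        ring
      rw [hexp q hq h2, hexp r hrm hr2] at hr
      generalize q.coeff 1 = s at hr
      generalize q.coeff 0 = t at hr
      generalize r.coeff 1 = s' at hr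
      generalize r.coeff 0 = u at hr
      have key : (X ^ 4 + C a * X ^ 2 + C b * X + C c : R[X]) =
          X ^ 4 + C (s + s') * X ^ 3 + C (t + u + s * s') * X ^ 2 + C (s * u + t * s') * X +
            C (t * u) := by
        rw [hr]
        simp only [C_add, C_mul]
        ring
      have k3 := congrArg (fun f => coeff f 3) key
      have k2 := congrArg (fun f => coeff f 2) key
      have k1 := congrArg (fun f => coeff f 1) key
      have k0 := congrArg (fun f => coeff f 0) key
      simp only [coeff_add, coeff_C_mul, coeff_X_pow, coeff_X, coeff_C] at k3 k2 k1 k0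
      norm_num at k3 k2 k1 k0
      have hs : s' = -s := by linear_combination -k3
      subst hs
      exact hquad s t u ⟨by linear_combination -k2, by linear_combination -k1, k0.symm⟩

variable {p : ℕ} [Fact p.Prime]

lemma toZMod_eq_zero_iff_dvd {x : ℤ_[p]} : PadicInt.toZMod x = 0 ↔ (p : ℤ_[p]) ∣ x := by
  rw [← RingHom.mem_ker, PadicInt.ker_toZMod, PadicInt.maximalIdeal_eq_span_p,
    Ideal.mem_span_singleton]

lemma isUnit_iff_toZMod_ne_zero {x : ℤ_[p]} : IsUnit x ↔ PadicInt.toZMod x ≠ 0 := by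
  rw [Ne, toZMod_eq_zero_iff_dvd, ← PadicInt.norm_lt_one_iff_dvd, PadicInt.isUnit_iff]
  exact ⟨fun h => by simp [h], fun h => le_antisymm (PadicInt.norm_le_one x) (not_lt.mp h)⟩

lemma isUnit_two_padicInt (hodd : p ≠ 2) : IsUnit (2 : ℤ_[p]) := by
  rw [isUnit_iff_toZMod_ne_zero, map_ofNat]
  have : Fact (2 < p) := ⟨lt_of_le_of_ne (Fact.out : p.Prime).two_le (Ne.symm hodd)⟩
  exact Ring.two_ne_zero (by rwa [ZMod.ringChar_zmod_n])

/-- A simple root modulo `p` lifts to a root in `ℤ_[p]`. -/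
lemma exists_root_of_simple_root_mod_p (F : ℤ_[p][X]) (a : ℤ_[p])
    (h0 : PadicInt.toZMod (F.eval a) = 0) (h1 : PadicInt.toZMod (F.derivative.eval a) ≠ 0) :
    ∃ z, F.eval z = 0 ∧ PadicInt.toZMod z = PadicInt.toZMod a := by
  have hd : ‖F.derivative.eval a‖ = 1 :=
    PadicInt.isUnit_iff.mp (isUnit_iff_toZMod_ne_zero.mpr h1)
  have hn : ‖F.aeval a‖ < ‖F.derivative.aeval a‖ ^ 2 := by
    simp only [coe_aeval_eq_eval, hd, one_pow]
    rwa [PadicInt.norm_lt_one_iff_dvd, ← toZMod_eq_zero_iff_dvd]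
  obtain ⟨z, hz, hza, -, -⟩ := hensels_lemma hn
  simp only [coe_aeval_eq_eval, hd] at hz hza
  refine ⟨z, hz, ?_⟩
  rwa [← sub_eq_zero, ← map_sub, toZMod_eq_zero_iff_dvd, ← PadicInt.norm_lt_one_iff_dvd]

lemma quartic_ne_zero_of_single_slope {a b d : ℤ_[p]} (hd : IsUnit d) (x : ℤ_[p]) :
    x ^ 4 + (p * a) * x ^ 2 + (p ^ 2 * b) * x + p ^ 2 * d ≠ 0 := by
  intro h
  have hp : Prime (p : ℤ_[p]) := PadicInt.prime_p
  have hx : (p : ℤ_[p]) ∣ x := by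
    refine hp.dvd_of_dvd_pow (n := 4) ⟨-(a * x ^ 2 + p * b * x + p * d), ?_⟩
    linear_combination h
  obtain ⟨y, rfl⟩ := hx
  refine hp.not_isUnit (isUnit_of_dvd_unit ⟨-(p * y ^ 4 + a * y ^ 2 + b * y), ?_⟩ hd)
  have hp2 : (p : ℤ_[p]) ^ 2 ≠ 0 := pow_ne_zero 2 hp.ne_zero
  apply mul_left_cancel₀ hp2
  linear_combination h

lemma dvd_of_quadratic_factors {a b d s t u : ℤ_[p]}
    (h2 : t + u - s ^ 2 = p * a) (h1 : s * (u - t) = p ^ 2 * b) (h0 : t * u = p ^ 2 * d) :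
    (p : ℤ_[p]) ∣ s ∧ (p : ℤ_[p]) ∣ t ∧ (p : ℤ_[p]) ∣ u := by
  simp only [← toZMod_eq_zero_iff_dvd]
  have e2 := congrArg PadicInt.toZMod h2
  have e1 := congrArg PadicInt.toZMod h1
  have e0 := congrArg PadicInt.toZMod h0
  simp only [map_sub, map_add, map_mul, map_pow, map_natCast, CharP.cast_eq_zero, zero_mul,
    ne_eq, OfNat.ofNat_ne_zero, not_false_eq_true, zero_pow] at e2 e1 e0
  generalize PadicInt.toZMod s = S at *
  generalize PadicInt.toZMod t = T at *
  generalize PadicInt.toZMod u = U at *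
  rcases mul_eq_zero.mp e0 with hT | hU
  · subst hT
    have hS : S = 0 := by
      have : S ^ 3 = 0 := by linear_combination e1 - S * e2
      exact pow_eq_zero_iff (by norm_num) |>.mp this
    subst hS
    exact ⟨rfl, rfl, by linear_combination e2⟩
  · subst hU
    have hS : S = 0 := by
      have : S ^ 3 = 0 := by linear_combination -e1 - S * e2
      exact pow_eq_zero_iff (by norm_num) |>.mp this
    subst hS
    exact ⟨rfl, by linear_combination e2, rfl⟩

/-- Reducibility of `(X² - pα)² + p²(bX + e)` in terms of the two parameters of a factorization
into quadratics. -/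
lemma not_irreducible_iff_exists {b α e h : ℤ_[p]} (hh : 2 * h = 1) (hd : IsUnit (α ^ 2 + e)) :
    ¬ Irreducible (X ^ 4 + C (-2 * p * α) * X ^ 2 + C (p ^ 2 * b) * X + C (p ^ 2 * (α ^ 2 + e)) :
        ℤ_[p][X]) ↔
      ∃ s w : ℤ_[p], b = 2 * s * w ∧ e = h ^ 2 * p ^ 2 * s ^ 4 - α * p * s ^ 2 - w ^ 2 := by
  have hp0 : (p : ℤ_[p]) ≠ 0 := PadicInt.prime_p.ne_zero
  have hroot : ∀ x : ℤ_[p],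
      x ^ 4 + -2 * p * α * x ^ 2 + p ^ 2 * b * x + p ^ 2 * (α ^ 2 + e) ≠ 0 := by
    intro x hx
    refine quartic_ne_zero_of_single_slope (a := -2 * α) (b := b) hd x ?_
    linear_combination hx
  rw [irreducible_quartic_iff, and_iff_right hroot]
  push Not
  constructor
  · rintro ⟨s, t, u, h2, h1, h0⟩
    obtain ⟨⟨s, rfl⟩, ⟨t, rfl⟩, ⟨u, rfl⟩⟩ :=
      dvd_of_quadratic_factors (a := -2 * α) (by linear_combination h2) h1 h0
    have h2' : t + u - p * s ^ 2 = -2 * α := by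
      apply mul_left_cancel₀ hp0
      linear_combination h2
    have h1' : s * (u - t) = b := by
      apply mul_left_cancel₀ (pow_ne_zero 2 hp0)
      linear_combination h1
    have h0' : t * u = α ^ 2 + e := by
      apply mul_left_cancel₀ (pow_ne_zero 2 hp0)
      linear_combination h0
    refine ⟨s, h * (u - t), by linear_combination -h1' - s * (u - t) * hh, ?_⟩
    have hα : α = h * p * s ^ 2 - h * (t + u) := by linear_combination h * h2' - α * hh
    subst hα
    linear_combination (-1) * h0' - t * u * (2 * h + 1) * hh -
      h * p * s ^ 2 * (p * s ^ 2 - t - u) * hh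
  · rintro ⟨s, w, rfl, rfl⟩
    refine ⟨p * s, p * (h * p * s ^ 2 - α - w), p * (h * p * s ^ 2 - α + w), ?_, by ring, ?_⟩
    · linear_combination p ^ 2 * s ^ 2 * hh
    · linear_combination -p ^ 3 * s ^ 2 * α * hh

end Factorization
section Representation

variable {p : ℕ} [Fact p.Prime]

/-- If `pᵏe` with `e` a unit has the shape `gp²s⁴ - αps² - w²`, then `pᵏ` divides `2sw` and
`-eαᵏ` is a square modulo `p`. -/
lemma dvd_and_isSquare_of_representation {α e : ℤ_[p]} (k : ℕ)
    (hα : k ≠ 0 → PadicInt.toZMod α ≠ 0) (g s w : ℤ_[p])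
    (h : p ^ k * e = g * p ^ 2 * s ^ 4 - α * p * s ^ 2 - w ^ 2) :
    (p : ℤ_[p]) ^ k ∣ 2 * s * w ∧
      IsSquare (-PadicInt.toZMod e * PadicInt.toZMod α ^ k) := by
  have hp0 : (p : ℤ_[p]) ≠ 0 := PadicInt.prime_p.ne_zero
  have hw : k ≠ 0 → (p : ℤ_[p]) ∣ w := fun hk => by
    obtain ⟨j, rfl⟩ := Nat.exists_eq_succ_of_ne_zero hk
    refine PadicInt.prime_p.dvd_of_dvd_pow (n := 2)
      ⟨g * p * s ^ 4 - α * s ^ 2 - p ^ j * e, ?_⟩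
    rw [Nat.succ_eq_add_one, pow_succ] at h
    linear_combination h
  induction k using Nat.twoStepInduction generalizing g s w with
  | zero =>
    refine ⟨by simp, PadicInt.toZMod w, ?_⟩
    have h' := congrArg PadicInt.toZMod h
    simp only [map_sub, map_mul, map_pow, map_natCast, CharP.cast_eq_zero] at h'
    simp only [pow_zero] at h' ⊢
    linear_combination -h'
  | one =>
    obtain ⟨w, rfl⟩ := hw one_ne_zero
    refine ⟨⟨2 * s * w, by ring⟩, PadicInt.toZMod (α * s), ?_⟩
    have h' : e = g * p * s ^ 4 - α * s ^ 2 - p * w ^ 2 := by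
      apply mul_left_cancel₀ hp0
      linear_combination h
    have h'' := congrArg PadicInt.toZMod h'
    simp only [map_sub, map_mul, map_pow, map_natCast, CharP.cast_eq_zero] at h'' ⊢
    linear_combination -PadicInt.toZMod α * h''
  | more k ih _ =>
    obtain ⟨w, rfl⟩ := hw (by simp)
    have h1 : α * s ^ 2 = p * (g * s ^ 4 - w ^ 2 - p ^ k * e) := by
      apply mul_left_cancel₀ hp0
      linear_combination h
    have hs : (p : ℤ_[p]) ∣ s := by
      rcases PadicInt.prime_p.dvd_or_dvd (Dvd.intro _ h1.symm) with hpα | hps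
      · exact absurd (toZMod_eq_zero_iff_dvd.mpr hpα) (hα (by simp))
      · exact PadicInt.prime_p.dvd_of_dvd_pow hps
    obtain ⟨s, rfl⟩ := hs
    have h2 : p ^ k * e = (g * p ^ 2) * p ^ 2 * s ^ 4 - α * p * s ^ 2 - w ^ 2 := by
      apply mul_left_cancel₀ (pow_ne_zero 2 hp0)
      linear_combination h
    have hw' : k ≠ 0 → (p : ℤ_[p]) ∣ w := fun hk => by
      obtain ⟨j, rfl⟩ := Nat.exists_eq_succ_of_ne_zero hk
      refine PadicInt.prime_p.dvd_of_dvd_pow (n := 2)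
        ⟨g * p ^ 2 * p * s ^ 4 - α * s ^ 2 - p ^ j * e, ?_⟩
      rw [Nat.succ_eq_add_one, pow_succ] at h2
      linear_combination h2
    obtain ⟨⟨c, hc⟩, r, hr⟩ := ih (fun _ => hα (by simp)) (g * p ^ 2) s w h2 hw'
    refine ⟨⟨c, by linear_combination p ^ 2 * hc⟩, r * PadicInt.toZMod α, ?_⟩
    linear_combination PadicInt.toZMod α ^ 2 * hr

lemma exists_root_even_sextic (a₆ a₄ a₂ a₀ x : ℤ_[p])
    (h0 : PadicInt.toZMod (a₆ * x ^ 6 + a₄ * x ^ 4 + a₂ * x ^ 2 + a₀) = 0)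
    (h1 : PadicInt.toZMod (6 * a₆ * x ^ 5 + 4 * a₄ * x ^ 3 + 2 * a₂ * x) ≠ 0) :
    ∃ z, a₆ * z ^ 6 + a₄ * z ^ 4 + a₂ * z ^ 2 + a₀ = 0 ∧
      PadicInt.toZMod z = PadicInt.toZMod x := by
  have heval : ∀ z : ℤ_[p], (C a₆ * X ^ 6 + C a₄ * X ^ 4 + C a₂ * X ^ 2 + C a₀).eval z =
      a₆ * z ^ 6 + a₄ * z ^ 4 + a₂ * z ^ 2 + a₀ := fun z => by simp
  have hder : (derivative (C a₆ * X ^ 6 + C a₄ * X ^ 4 + C a₂ * X ^ 2 + C a₀)).eval x =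
      6 * a₆ * x ^ 5 + 4 * a₄ * x ^ 3 + 2 * a₂ * x := by
    simp
    ring
  obtain ⟨z, hz, hzx⟩ := exists_root_of_simple_root_mod_p _ x ((heval x).symm ▸ h0)
    (hder.symm ▸ h1)
  exact ⟨z, (heval z).symm.trans hz, hzx⟩

lemma exists_representation_of_isSquare (hodd : p ≠ 2) {α e : ℤ_[p]}
    (he : PadicInt.toZMod e ≠ 0) (k : ℕ) (hα : k ≠ 0 → PadicInt.toZMod α ≠ 0) (g b : ℤ_[p])
    (hb : (p : ℤ_[p]) ^ k ∣ b) (hsq : IsSquare (-PadicInt.toZMod e * PadicInt.toZMod α ^ k)) :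
    ∃ s w : ℤ_[p], b = 2 * s * w ∧ p ^ k * e = g * p ^ 2 * s ^ 4 - α * p * s ^ 2 - w ^ 2 := by
  have hunit2 := isUnit_two_padicInt hodd
  have h2 : (2 : ZMod p) ≠ 0 := by
    rw [← map_ofNat PadicInt.toZMod 2]
    exact isUnit_iff_toZMod_ne_zero.mp hunit2
  obtain ⟨h, hh⟩ := hunit2.exists_right_inv
  obtain ⟨b, rfl⟩ := hb
  induction k using Nat.twoStepInduction generalizing g with
  | zero =>
    obtain ⟨r, hr⟩ := hsq
    obtain ⟨w₀, rfl⟩ := ZMod.ringHom_surjective PadicInt.toZMod r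
    simp only [pow_zero, mul_one] at hr
    have hw₀ : PadicInt.toZMod w₀ ≠ 0 := fun h0 => he (by simpa [h0] using hr)
    obtain ⟨w, hw, hww₀⟩ := exists_root_even_sextic
      1 e (α * p * (h * b) ^ 2) (-(g * p ^ 2 * (h * b) ^ 4)) w₀
      (by
        simp only [map_add, map_neg, map_mul, map_pow, map_natCast, CharP.cast_eq_zero, map_one]
        linear_combination -PadicInt.toZMod w₀ ^ 4 * hr)
      (by
        simp only [map_add, map_mul, map_pow, map_natCast, CharP.cast_eq_zero, map_one,
          map_ofNat PadicInt.toZMod]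
        intro h0
        refine mul_ne_zero h2 (pow_ne_zero 5 hw₀) ?_
        linear_combination h0 + 4 * PadicInt.toZMod w₀ ^ 3 * hr)
    obtain ⟨v, hv⟩ := (isUnit_iff_toZMod_ne_zero.mpr (hww₀ ▸ hw₀)).exists_right_inv
    refine ⟨h * b * v, w, ?_, ?_⟩
    · linear_combination -b * hh - 2 * h * b * hv
    · have hv2 : w ^ 2 * v ^ 2 = 1 := by rw [← mul_pow, hv, one_pow]
      have hv4 : w ^ 4 * v ^ 4 = 1 := by rw [← mul_pow, hv, one_pow]
      linear_combination v ^ 4 * hw - (e + w ^ 2) * hv4 - α * p * h ^ 2 * b ^ 2 * v ^ 2 * hv2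
  | one =>
    have hα' := hα one_ne_zero
    obtain ⟨r, hr⟩ := hsq
    obtain ⟨s₀, hs₀'⟩ := ZMod.ringHom_surjective PadicInt.toZMod (r / PadicInt.toZMod α)
    have hr' : -PadicInt.toZMod e = PadicInt.toZMod α * PadicInt.toZMod s₀ ^ 2 := by
      rw [hs₀']
      field_simp
      linear_combination hr
    have hs₀ : PadicInt.toZMod s₀ ≠ 0 := fun h0 => he (by simpa [h0] using hr')
    obtain ⟨s, hs, hss₀⟩ := exists_root_even_sextic
      (g * (p : ℤ_[p])) (-α) (-e) (-(p * (h * b) ^ 2)) s₀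
      (by
        simp only [map_add, map_neg, map_mul, map_pow, map_natCast, CharP.cast_eq_zero]
        linear_combination PadicInt.toZMod s₀ ^ 2 * hr')
      (by
        simp only [map_add, map_neg, map_mul, map_pow, map_natCast, CharP.cast_eq_zero,
          map_ofNat PadicInt.toZMod]
        intro h0
        refine mul_ne_zero (mul_ne_zero h2 hα') (pow_ne_zero 3 hs₀) ?_
        linear_combination -h0 + 2 * PadicInt.toZMod s₀ * hr')
    obtain ⟨v, hv⟩ := (isUnit_iff_toZMod_ne_zero.mpr (hss₀ ▸ hs₀)).exists_right_inv
    refine ⟨s, p * h * b * v, ?_, ?_⟩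
    · linear_combination -p * b * hh - 2 * p * h * b * hv
    · have hv2 : s ^ 2 * v ^ 2 = 1 := by rw [← mul_pow, hv, one_pow]
      linear_combination -p * v ^ 2 * hs - p * (e - g * p * s ^ 4 + α * s ^ 2) * hv2
  | more k ih _ =>
    have hα' := hα (by simp)
    have hsq' : IsSquare (-PadicInt.toZMod e * PadicInt.toZMod α ^ k) := by
      obtain ⟨r, hr⟩ := hsq
      refine ⟨r / PadicInt.toZMod α, ?_⟩
      field_simp
      linear_combination hr
    obtain ⟨s, w, hb, hsw⟩ := ih (fun _ => hα') (g * p ^ 2) hsq'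
    refine ⟨p * s, p * w, ?_, ?_⟩
    · linear_combination p ^ 2 * hb
    · linear_combination p ^ 2 * hsw

/-- The irreducibility criterion for `(X² - pα)² + p²(bX + pᵏe)` with `e` a unit. -/
lemma not_irreducible_iff_isSquare (hodd : p ≠ 2) {b α e : ℤ_[p]} (k : ℕ)
    (he : PadicInt.toZMod e ≠ 0) (hd : PadicInt.toZMod (α ^ 2 + (p : ℤ_[p]) ^ k * e) ≠ 0) :
    ¬ Irreducible (X ^ 4 + C (-2 * p * α) * X ^ 2 + C (p ^ 2 * b) * X +
        C (p ^ 2 * (α ^ 2 + p ^ k * e)) : ℤ_[p][X]) ↔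
      (p : ℤ_[p]) ^ k ∣ b ∧ IsSquare (-PadicInt.toZMod e * PadicInt.toZMod α ^ k) := by
  obtain ⟨h, hh⟩ := (isUnit_two_padicInt hodd).exists_right_inv
  have hα : k ≠ 0 → PadicInt.toZMod α ≠ 0 := by
    intro hk h0
    simp [h0, hk] at hd
  rw [not_irreducible_iff_exists hh (isUnit_iff_toZMod_ne_zero.mpr hd)]
  constructor
  · rintro ⟨s, w, rfl, h⟩
    exact dvd_and_isSquare_of_representation k hα _ s w h
  · rintro ⟨hb, hsq⟩
    exact exists_representation_of_isSquare hodd he k hα _ b hb hsq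

end Representation
section Counting

variable {p : ℕ} [Fact p.Prime]

lemma two_mul_card_isSquare_mul (hodd : p ≠ 2) {c : ZMod p} (hc : c ≠ 0) :
    2 * ((Finset.univ.filter fun y : ZMod p => y ≠ 0 ∧ IsSquare (c * y)).card : ℤ) = p - 1 := by
  classical
  have hchar : ringChar (ZMod p) ≠ 2 := by rwa [ZMod.ringChar_zmod_n]
  have hsum : ∑ y : ZMod p, quadraticChar (ZMod p) (c * y) = 0 := by
    simp_rw [map_mul, ← Finset.mul_sum, quadraticChar_sum_zero hchar, mul_zero]
  have hterm : ∀ y : ZMod p, 2 * (if y ≠ 0 ∧ IsSquare (c * y) then (1 : ℤ) else 0) =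
      quadraticChar (ZMod p) (c * y) + (1 - if y = 0 then 1 else 0) := by
    intro y
    by_cases hy : y = 0
    · simp [hy]
    · have hcy : c * y ≠ 0 := mul_ne_zero hc hy
      by_cases hsq : IsSquare (c * y)
      · rw [(quadraticChar_one_iff_isSquare hcy).mpr hsq]
        simp [hy, hsq]
      · rw [quadraticChar_neg_one_iff_not_isSquare.mpr hsq]
        simp [hy, hsq]
  rw [Finset.card_filter]
  push_cast
  rw [Finset.mul_sum, Finset.sum_congr rfl fun y _ => hterm y, Finset.sum_add_distrib, hsum,
    Finset.sum_sub_distrib]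
  simp [ZMod.card]

open Classical in
/-- The residues `(ᾱ, ē)` for which `(X² - pα)² + p²(bX + pᵏe)` satisfies the constant term
condition and is reducible as soon as `pᵏ ∣ b`. -/
noncomputable def reducibleResidues (p : ℕ) [Fact p.Prime] (k : ℕ) : Finset (ZMod p × ZMod p) :=
  Finset.univ.filter fun t =>
    t.2 ≠ 0 ∧ IsSquare (-t.2 * t.1 ^ k) ∧ t.1 ^ 2 + (p : ZMod p) ^ k * t.2 ≠ 0

lemma card_filter_prod_eq_sum {α β : Type*} [Fintype α] [Fintype β] (P : α × β → Prop)
    [DecidablePred P] : (Finset.univ.filter P).card =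
      ∑ x, (Finset.univ.filter fun y => P (x, y)).card := by
  simp only [Finset.card_filter, Fintype.sum_prod_type]

lemma two_mul_card_reducibleResidues_zero (hodd : p ≠ 2) :
    2 * ((reducibleResidues p 0).card : ℤ) = (p - 1) * (p - 2) := by
  classical
  have hfib : ∀ x : ZMod p, 2 * ((Finset.univ.filter fun y : ZMod p =>
      y ≠ 0 ∧ IsSquare (-y * x ^ 0) ∧ x ^ 2 + (p : ZMod p) ^ 0 * y ≠ 0).card : ℤ) =
        (p - 1 - 2) + if x = 0 then 2 else 0 := by
    intro x
    have hbase := two_mul_card_isSquare_mul hodd (c := (-1 : ZMod p)) (by simp)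
    by_cases hx : x = 0
    · rw [← hbase.trans (by simp [hx] : (p : ℤ) - 1 = p - 1 - 2 + if x = 0 then 2 else 0)]
      congr 3
      ext y
      simp only [hx, Finset.mem_filter, Finset.mem_univ, true_and]
      simp
      tauto
    · have hset : (Finset.univ.filter fun y : ZMod p =>
          y ≠ 0 ∧ IsSquare (-y * x ^ 0) ∧ x ^ 2 + (p : ZMod p) ^ 0 * y ≠ 0) =
          (Finset.univ.filter fun y : ZMod p => y ≠ 0 ∧ IsSquare (-1 * y)).erase (-x ^ 2) := by
        ext y
        have : x ^ 2 + y = 0 ↔ y = -x ^ 2 := by rw [add_comm, add_eq_zero_iff_eq_neg]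
        simp only [Finset.mem_filter, Finset.mem_univ, true_and, Finset.mem_erase, pow_zero,
          mul_one, one_mul, neg_mul, ne_eq, this]
        tauto
      have hmem : -x ^ 2 ∈ Finset.univ.filter fun y : ZMod p => y ≠ 0 ∧ IsSquare (-1 * y) := by
        simpa [hx] using IsSquare.sq x
      have hcard := Finset.card_erase_add_one hmem
      rw [hset, if_neg hx]
      zify at hcard
      linarith
  rw [reducibleResidues, card_filter_prod_eq_sum]
  push_cast
  rw [Finset.mul_sum, Finset.sum_congr rfl fun x _ => hfib x, Finset.sum_add_distrib]
  simp [ZMod.card]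
  ring

lemma two_mul_card_reducibleResidues (hodd : p ≠ 2) {k : ℕ} (hk : k ≠ 0) :
    2 * ((reducibleResidues p k).card : ℤ) = (p - 1) ^ 2 := by
  classical
  have hfib : ∀ x : ZMod p, 2 * ((Finset.univ.filter fun y : ZMod p =>
      y ≠ 0 ∧ IsSquare (-y * x ^ k) ∧ x ^ 2 + (p : ZMod p) ^ k * y ≠ 0).card : ℤ) =
        (p - 1) * (1 - if x = 0 then 1 else 0) := by
    intro x
    by_cases hx : x = 0
    · simp [hx, hk]
    · have hbase := two_mul_card_isSquare_mul hodd (c := -x ^ k) (by simp [hx])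
      rw [if_neg hx, sub_zero, mul_one, ← hbase]
      congr 3
      ext y
      simp [hx, hk, mul_comm]
  rw [reducibleResidues, card_filter_prod_eq_sum]
  push_cast
  rw [Finset.mul_sum, Finset.sum_congr rfl fun x _ => hfib x, ← Finset.mul_sum,
    Finset.sum_sub_distrib]
  simp [ZMod.card]
  ring

open Classical in
lemma card_sq_add_ne_zero :
    ((Finset.univ.filter fun t : ZMod p × ZMod p => t.1 ^ 2 + t.2 ≠ 0).card : ℤ) =
      p * (p - 1) := by
  rw [card_filter_prod_eq_sum]
  have hfib : ∀ x : ZMod p,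
      ((Finset.univ.filter fun y : ZMod p => x ^ 2 + y ≠ 0).card : ℤ) = p - 1 := by
    intro x
    have hset : (Finset.univ.filter fun y : ZMod p => x ^ 2 + y ≠ 0) =
        Finset.univ.erase (-x ^ 2) := by
      ext y
      have : x ^ 2 + y = 0 ↔ y = -x ^ 2 := by rw [add_comm, add_eq_zero_iff_eq_neg]
      simp [this]
    have hcard := Finset.card_erase_add_one (Finset.mem_univ (-x ^ 2))
    rw [Finset.card_univ, ZMod.card] at hcard
    rw [hset]
    zify at hcard
    linarith
  push_cast
  rw [Finset.sum_congr rfl fun x _ => hfib x]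
  simp [ZMod.card]
  ring

end Counting

section Haar

variable {p : ℕ} [Fact p.Prime]

lemma isOpen_setOf_pow_dvd (n : ℕ) : IsOpen {x : ℤ_[p] | (p : ℤ_[p]) ^ n ∣ x} := by
  have hset : {x : ℤ_[p] | (p : ℤ_[p]) ^ n ∣ x} =
      Metric.closedBall 0 ((p : ℝ) ^ (-n : ℤ)) := by
    ext x
    rw [mem_closedBall_zero_iff, PadicInt.norm_le_pow_iff_mem_span_pow, Ideal.mem_span_singleton]
    rfl
  rw [hset]
  refine IsUltrametricDist.isOpen_closedBall _ (zpow_ne_zero _ ?_)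
  exact_mod_cast (Fact.out : p.Prime).ne_zero

variable (m : Measure ℤ_[p]) [m.IsAddHaarMeasure] [IsProbabilityMeasure m]

lemma measureReal_setOf_pow_dvd (n : ℕ) :
    m.real {x | (p : ℤ_[p]) ^ n ∣ x} = ((p : ℝ) ^ n)⁻¹ := by
  have hp : p ≠ 0 := (Fact.out : p.Prime).ne_zero
  have : NeZero (p ^ n) := ⟨pow_ne_zero n hp⟩
  set H : AddSubgroup ℤ_[p] := (PadicInt.toZModPow (p := p) n).toAddMonoidHom.ker with hH
  have hset : (H : Set ℤ_[p]) = {x | (p : ℤ_[p]) ^ n ∣ x} := by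
    ext x
    have := RingHom.mem_ker (f := PadicInt.toZModPow (p := p) n) (r := x)
    rw [PadicInt.ker_toZModPow, Ideal.mem_span_singleton] at this
    exact this.symm
  have hindex : H.index = p ^ n := by
    rw [hH, AddSubgroup.index_ker, AddMonoidHom.range_eq_top.mpr]
    · rw [AddSubgroup.card_top, Nat.card_zmod]
    · exact ZMod.ringHom_surjective (PadicInt.toZModPow n)
  have : H.FiniteIndex := ⟨by rw [hindex]; exact pow_ne_zero n hp⟩
  have hmul := AddSubgroup.index_mul_measure H
    (hset ▸ (isOpen_setOf_pow_dvd n).measurableSet) m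
  rw [hset, hindex, measure_univ] at hmul
  have hreal := congrArg ENNReal.toReal hmul
  rw [ENNReal.toReal_mul, ENNReal.toReal_natCast, ENNReal.toReal_one] at hreal
  push_cast at hreal
  exact eq_inv_of_mul_eq_one_right hreal

lemma setOf_residue_eq_preimage (k : ℕ) (t : ℤ_[p]) :
    {x : ℤ_[p] | ∃ y, x = p ^ k * y ∧ PadicInt.toZMod y = PadicInt.toZMod t} =
      (fun x => x + -(p ^ k * t)) ⁻¹' {x | (p : ℤ_[p]) ^ (k + 1) ∣ x} := by
  ext x
  constructor
  · rintro ⟨y, rfl, hy⟩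
    obtain ⟨z, hz⟩ : (p : ℤ_[p]) ∣ y - t := by
      rw [← toZMod_eq_zero_iff_dvd, map_sub, hy, sub_self]
    exact ⟨z, by linear_combination (p : ℤ_[p]) ^ k * hz⟩
  · rintro ⟨z, hz⟩
    refine ⟨t + p * z, ?_, by simp⟩
    simp only at hz
    linear_combination hz

lemma measurableSet_setOf_residue (k : ℕ) (τ : ZMod p) :
    MeasurableSet {x : ℤ_[p] | ∃ y, x = p ^ k * y ∧ PadicInt.toZMod y = τ} := by
  obtain ⟨t, rfl⟩ := ZMod.ringHom_surjective PadicInt.toZMod τ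
  rw [setOf_residue_eq_preimage]
  exact ((isOpen_setOf_pow_dvd _).preimage (by fun_prop)).measurableSet

lemma measureReal_setOf_residue (k : ℕ) (τ : ZMod p) :
    m.real {x : ℤ_[p] | ∃ y, x = p ^ k * y ∧ PadicInt.toZMod y = τ} = ((p : ℝ) ^ (k + 1))⁻¹ := by
  obtain ⟨t, rfl⟩ := ZMod.ringHom_surjective PadicInt.toZMod τ
  rw [setOf_residue_eq_preimage, measureReal_def, measure_preimage_add_right, ← measureReal_def,
    measureReal_setOf_pow_dvd]

/-- The pairs `(α, pᵏe)` whose residues `(ᾱ, ē)` lie in `T`. -/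
def residuePairs (k : ℕ) (T : Finset (ZMod p × ZMod p)) : Set (ℤ_[p] × ℤ_[p]) :=
  {q | ∃ y, q.2 = p ^ k * y ∧ (PadicInt.toZMod q.1, PadicInt.toZMod y) ∈ T}

lemma residuePairs_eq_biUnion (k : ℕ) (T : Finset (ZMod p × ZMod p)) :
    residuePairs k T = ⋃ t ∈ T, {x : ℤ_[p] | ∃ y, x = p ^ 0 * y ∧ PadicInt.toZMod y = t.1} ×ˢ
      {x : ℤ_[p] | ∃ y, x = p ^ k * y ∧ PadicInt.toZMod y = t.2} := by
  ext ⟨α, e⟩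
  simp only [residuePairs, Set.mem_ofPred_eq, Set.mem_iUnion, Set.mem_prod, pow_zero, one_mul,
    exists_eq_left']
  constructor
  · rintro ⟨y, he, hT⟩
    exact ⟨_, hT, rfl, y, he, rfl⟩
  · rintro ⟨t, hT, hα, y, he, hy⟩
    exact ⟨y, he, by rwa [hα, hy]⟩

lemma measurableSet_residuePairs (k : ℕ) (T : Finset (ZMod p × ZMod p)) :
    MeasurableSet (residuePairs k T) := by
  rw [residuePairs_eq_biUnion]
  exact T.measurableSet_biUnion fun t _ =>
    (measurableSet_setOf_residue 0 t.1).prod (measurableSet_setOf_residue k t.2)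

lemma measureReal_residuePairs (k : ℕ) (T : Finset (ZMod p × ZMod p)) :
    (m.prod m).real (residuePairs k T) = T.card * ((p : ℝ) ^ (k + 2))⁻¹ := by
  have hp : (p : ℤ_[p]) ≠ 0 := PadicInt.prime_p.ne_zero
  rw [residuePairs_eq_biUnion, measureReal_biUnion_finset]
  · simp_rw [measureReal_prod_prod, measureReal_setOf_residue]
    rw [Finset.sum_const, nsmul_eq_mul, ← mul_inv]
    ring
  · intro t _ t' _ htt'
    refine Set.disjoint_left.mpr ?_
    rintro ⟨α, e⟩ ⟨⟨y₁, h₁, h₁'⟩, y₂, h₂, h₂'⟩ ⟨⟨y₃, h₃, h₃'⟩, y₄, h₄, h₄'⟩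
    have e₁ : y₁ = y₃ := by simpa using h₁.symm.trans h₃
    have e₂ : y₂ = y₄ := mul_left_cancel₀ (pow_ne_zero k hp) (h₂.symm.trans h₄)
    exact htt' (Prod.ext (by rw [← h₁', ← h₃', e₁]) (by rw [← h₂', ← h₄', e₂]))
  · exact fun t _ => (measurableSet_setOf_residue 0 t.1).prod (measurableSet_setOf_residue k t.2)

end Haar
section Quartics

variable {p : ℕ} [Fact p.Prime]

/-- The scaling `(b, α, d) ↦ (p²d, p²b, -2pα)` from the parameters to the coefficients. -/
noncomputable def coeffHom (p : ℕ) [Fact p.Prime] : ℤ_[p] × ℤ_[p] × ℤ_[p] →+ (Fin 3 → ℤ_[p]) where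
  toFun q := ![p ^ 2 * q.2.2, p ^ 2 * q.1, -2 * p * q.2.1]
  map_zero' := by ext i; fin_cases i <;> simp
  map_add' q r := by ext i; fin_cases i <;> simp <;> ring

lemma coeffHom_apply (b α d : ℤ_[p]) :
    coeffHom p (b, α, d) = ![p ^ 2 * d, p ^ 2 * b, -2 * p * α] := rfl

lemma coeffHom_injective (hodd : p ≠ 2) : Function.Injective (coeffHom p) := by
  have hp0 : (p : ℤ_[p]) ≠ 0 := PadicInt.prime_p.ne_zero
  have h2 : (2 : ℤ_[p]) ≠ 0 := (isUnit_two_padicInt hodd).ne_zero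
  rintro ⟨b, α, d⟩ ⟨b', α', d'⟩ h
  rw [coeffHom_apply, coeffHom_apply] at h
  have h0 := congrFun h 0
  have h1 := congrFun h 1
  have h2 := congrFun h 2
  simp_all

lemma range_coeffHom (hodd : p ≠ 2) : Set.range (coeffHom p) =
    {c | (p : ℤ_[p]) ∣ c 2 ∧ (p : ℤ_[p]) ^ 2 ∣ c 1 ∧ (p : ℤ_[p]) ^ 2 ∣ c 0} := by
  obtain ⟨h, hh⟩ := (isUnit_two_padicInt hodd).exists_right_inv
  ext c
  constructor
  · rintro ⟨⟨b, α, d⟩, rfl⟩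
    exact ⟨⟨-2 * α, by simp [coeffHom_apply]; ring⟩, ⟨b, rfl⟩, ⟨d, rfl⟩⟩
  · rintro ⟨⟨a, ha⟩, ⟨b, hb⟩, ⟨d, hd⟩⟩
    refine ⟨(b, -h * a, d), ?_⟩
    rw [coeffHom_apply]
    ext i
    fin_cases i
    · simp [hd]
    · simp [hb]
    · simp [ha]
      linear_combination p * a * hh

lemma isOpenEmbedding_coeffHom (hodd : p ≠ 2) : Topology.IsOpenEmbedding (coeffHom p) := by
  have hcont : Continuous (coeffHom p) := by
    refine continuous_pi fun i => ?_
    fin_cases i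
    · exact (continuous_const.mul (continuous_snd.comp continuous_snd))
    · exact (continuous_const.mul continuous_fst)
    · exact (continuous_const.mul (continuous_fst.comp continuous_snd))
  refine ⟨(hcont.isClosedEmbedding (coeffHom_injective hodd)).isEmbedding, ?_⟩
  rw [range_coeffHom hodd]
  have hc : ∀ i : Fin 3, Continuous fun c : Fin 3 → ℤ_[p] => c i := fun i => continuous_apply i
  refine IsOpen.inter ?_ (IsOpen.inter ?_ ?_)
  · have := (isOpen_setOf_pow_dvd 1).preimage (hc 2)
    rwa [pow_one] at this
  · exact (isOpen_setOf_pow_dvd 2).preimage (hc 1)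
  · exact (isOpen_setOf_pow_dvd 2).preimage (hc 0)

/-- The shear `(b, α, e) ↦ (b, α, α² + e)`. -/
noncomputable def shear (p : ℕ) [Fact p.Prime] (q : ℤ_[p] × ℤ_[p] × ℤ_[p]) :
    ℤ_[p] × ℤ_[p] × ℤ_[p] :=
  (q.1, q.2.1, q.2.1 ^ 2 + q.2.2)

lemma shear_injective : Function.Injective (shear p) := by
  rintro ⟨b, α, d⟩ ⟨b', α', d'⟩ h
  simp only [shear, Prod.mk.injEq] at h
  obtain ⟨rfl, rfl, h⟩ := h
  simpa using h

lemma measurePreserving_shear (m : Measure ℤ_[p]) [m.IsAddHaarMeasure] [IsProbabilityMeasure m] :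
    MeasurePreserving (shear p) (m.prod (m.prod m)) (m.prod (m.prod m)) := by
  have hinner : MeasurePreserving (fun q : ℤ_[p] × ℤ_[p] => (q.1, q.1 ^ 2 + q.2))
      (m.prod m) (m.prod m) := by
    refine (MeasurePreserving.id m).skew_product (g := fun α e => α ^ 2 + e) ?_ ?_
    · exact Continuous.measurable (by fun_prop)
    · exact Filter.Eventually.of_forall fun α => map_add_left_eq_self m (α ^ 2)
  exact (MeasurePreserving.id m).prod hinner

lemma measurableEmbedding_shear : MeasurableEmbedding (shear p) := by
  refine (Continuous.isClosedEmbedding ?_ shear_injective).measurableEmbedding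
  unfold shear
  fun_prop

/-- Up to a positive constant, the measure of a set of coefficients is the product measure of the
corresponding set of parameters. -/
lemma exists_measureReal_image_eq (hodd : p ≠ 2) (μ : Measure (Fin 3 → ℤ_[p]))
    [μ.IsAddHaarMeasure] (m : Measure ℤ_[p]) [m.IsAddHaarMeasure] [IsProbabilityMeasure m] :
    ∃ κ : ℝ, κ ≠ 0 ∧ ∀ S : Set (ℤ_[p] × ℤ_[p] × ℤ_[p]),
      μ.real ((fun q => coeffHom p (shear p q)) '' S) = κ * (m.prod (m.prod m)).real S := by
  have hemb := isOpenEmbedding_coeffHom hodd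
  have hHaar : (μ.comap (coeffHom p)).IsAddHaarMeasure :=
    Measure.IsAddHaarMeasure.comap (mH := ContinuousAdd.measurableAdd) μ hemb
  have hprod : (m.prod m).IsAddHaarMeasure := Measure.prod.instIsAddHaarMeasure m m
  have hprod' : (m.prod (m.prod m)).IsAddHaarMeasure :=
    Measure.prod.instIsAddHaarMeasure m (m.prod m)
  refine ⟨Measure.addHaarScalarFactor (μ.comap (coeffHom p)) (m.prod (m.prod m)), ?_, ?_⟩
  · exact_mod_cast
      (Measure.addHaarScalarFactor_pos_of_isAddHaarMeasure _ (m.prod (m.prod m))).ne'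
  · intro S
    have himage : (fun q => coeffHom p (shear p q)) '' S = coeffHom p '' (shear p '' S) := by
      rw [Set.image_image]
    have hshear : (m.prod (m.prod m)) (shear p '' S) = (m.prod (m.prod m)) S := by
      rw [← (measurePreserving_shear m).measure_preimage_emb measurableEmbedding_shear,
        Set.preimage_image_eq _ shear_injective]
    have hsmul := congrArg (fun ν => ν (shear p '' S))
      (Measure.isAddLeftInvariant_eq_smul (μ.comap (coeffHom p)) (m.prod (m.prod m)))
    simp only [Measure.smul_apply, hshear] at hsmul
    rw [himage, measureReal_def, ← hemb.measurableEmbedding.comap_apply, hsmul, measureReal_def]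
    simp [ENNReal.smul_def]

/-- The quartic `(X² - pα)² + p²(bX + e)`, with parameters `(b, α, e)`. -/
noncomputable def quartic (q : ℤ_[p] × ℤ_[p] × ℤ_[p]) : ℤ_[p][X] :=
  X ^ 4 + C (-2 * p * q.2.1) * X ^ 2 + C (p ^ 2 * q.1) * X + C (p ^ 2 * (q.2.1 ^ 2 + q.2.2))

/-- The parameters with unit constant term. -/
def unitParams (p : ℕ) [Fact p.Prime] : Set (ℤ_[p] × ℤ_[p] × ℤ_[p]) :=
  {q | PadicInt.toZMod (q.2.1 ^ 2 + q.2.2) ≠ 0}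

/-- The parameters `(b, α, e)` with `v(e) = k ≤ v(b)` of reducible quartics. -/
def reducibleParams (p : ℕ) [Fact p.Prime] (k : ℕ) : Set (ℤ_[p] × ℤ_[p] × ℤ_[p]) :=
  {b | (p : ℤ_[p]) ^ k ∣ b} ×ˢ residuePairs k (reducibleResidues p k)

lemma mem_reducibleParams {k : ℕ} {q : ℤ_[p] × ℤ_[p] × ℤ_[p]} :
    q ∈ reducibleParams p k ↔ (p : ℤ_[p]) ^ k ∣ q.1 ∧ ∃ y, q.2.2 = p ^ k * y ∧
      PadicInt.toZMod y ≠ 0 ∧ IsSquare (-PadicInt.toZMod y * PadicInt.toZMod q.2.1 ^ k) ∧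
        PadicInt.toZMod (q.2.1 ^ 2 + q.2.2) ≠ 0 := by
  simp only [reducibleParams, residuePairs, reducibleResidues, Set.mem_prod, Set.mem_ofPred_eq,
    Finset.mem_filter, Finset.mem_univ, true_and]
  refine and_congr_right fun _ => exists_congr fun y => and_congr_right fun hy => ?_
  rw [hy]
  simp only [map_add, map_mul, map_pow, map_natCast]

lemma reducible_iff_mem_iUnion (hodd : p ≠ 2) {q : ℤ_[p] × ℤ_[p] × ℤ_[p]} (hq : q.2.2 ≠ 0) :
    q ∈ unitParams p ∧ ¬ Irreducible (quartic q) ↔ q ∈ ⋃ k, reducibleParams p k := by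
  obtain ⟨b, α, e⟩ := q
  simp only [Set.mem_iUnion, mem_reducibleParams]
  constructor
  · rintro ⟨hd, hirr⟩
    have hspec := PadicInt.unitCoeff_spec hq
    rw [mul_comm] at hspec
    have hunit := isUnit_iff_toZMod_ne_zero.mp (PadicInt.unitCoeff hq).isUnit
    set k := PadicInt.valuation e
    set y : ℤ_[p] := ((PadicInt.unitCoeff hq : ℤ_[p]ˣ) : ℤ_[p])
    simp only at hspec
    have hd' : PadicInt.toZMod (α ^ 2 + (p : ℤ_[p]) ^ k * y) ≠ 0 := hspec ▸ hd
    have hirr' := hirr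
    simp only [quartic] at hirr'
    rw [hspec, not_irreducible_iff_isSquare hodd k hunit hd'] at hirr'
    exact ⟨k, hirr'.1, y, hspec, hunit, hirr'.2, hd⟩
  · rintro ⟨k, hb, y, hy, hunit, hsq, hd⟩
    refine ⟨hd, ?_⟩
    obtain rfl : e = p ^ k * y := hy
    exact (not_irreducible_iff_isSquare hodd k hunit hd).mpr ⟨hb, hsq⟩

lemma reducibleParams_subset_unitParams (k : ℕ) : reducibleParams p k ⊆ unitParams p := by
  intro q hq
  obtain ⟨-, y, -, -, -, hd⟩ := mem_reducibleParams.mp hq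
  exact hd

lemma pairwise_disjoint_reducibleParams :
    Pairwise (Function.onFun Disjoint (reducibleParams p)) := by
  have key : ∀ {j k : ℕ} {y z : ℤ_[p]}, j < k → (p : ℤ_[p]) ^ j * y = p ^ k * z →
      PadicInt.toZMod y = 0 := by
    intro j k y z hjk h
    obtain ⟨i, rfl⟩ := Nat.exists_eq_add_of_lt hjk
    have hy : y = p * (p ^ i * z) := by
      apply mul_left_cancel₀ (pow_ne_zero j PadicInt.prime_p.ne_zero)
      linear_combination h
    simp [hy]
  intro j k hjk
  refine Set.disjoint_left.mpr fun q hj hk => ?_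
  obtain ⟨-, y, hy, hy0, -⟩ := mem_reducibleParams.mp hj
  obtain ⟨-, z, hz, hz0, -⟩ := mem_reducibleParams.mp hk
  rcases lt_or_gt_of_ne hjk with hlt | hlt
  · exact hy0 (key hlt (hy.symm.trans hz))
  · exact hz0 (key hlt (hz.symm.trans hy))

lemma measurableSet_reducibleParams (k : ℕ) : MeasurableSet (reducibleParams p k) :=
  (isOpen_setOf_pow_dvd k).measurableSet.prod (measurableSet_residuePairs k _)

variable (m : Measure ℤ_[p]) [m.IsAddHaarMeasure] [IsProbabilityMeasure m]

lemma measureReal_unitParams :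
    (m.prod (m.prod m)).real (unitParams p) = p * (p - 1) * ((p : ℝ) ^ 2)⁻¹ := by
  classical
  have hset : unitParams p = Set.univ ×ˢ residuePairs 0
      (Finset.univ.filter fun t : ZMod p × ZMod p => t.1 ^ 2 + t.2 ≠ 0) := by
    ext ⟨b, α, e⟩
    simp [unitParams, residuePairs]
  have hcard := congrArg (Int.cast : ℤ → ℝ) (card_sq_add_ne_zero (p := p))
  push_cast at hcard
  rw [hset, measureReal_prod_prod, measureReal_residuePairs, hcard]
  simp

lemma measureReal_reducibleParams (k : ℕ) :
    (m.prod (m.prod m)).real (reducibleParams p k) =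
      (reducibleResidues p k).card * ((p : ℝ) ^ (2 * k + 2))⁻¹ := by
  rw [reducibleParams, measureReal_prod_prod, measureReal_residuePairs,
    measureReal_setOf_pow_dvd, mul_left_comm, ← mul_inv]
  ring

lemma hasSum_card_reducibleResidues (hodd : p ≠ 2) :
    HasSum (fun k => ((reducibleResidues p k).card : ℝ) * ((p : ℝ) ^ (2 * k + 2))⁻¹)
      (((p : ℝ) - 1) * (p ^ 2 - p - 1) / (2 * p ^ 2 * (p + 1))) := by
  have hp1 : (1 : ℝ) < p := by exact_mod_cast (Fact.out : p.Prime).one_lt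
  have hzero : ((reducibleResidues p 0).card : ℝ) = ((p : ℝ) - 1) * (p - 2) / 2 := by
    have hcard : 2 * ((reducibleResidues p 0).card : ℝ) = (p - 1) * (p - 2) := by
      exact_mod_cast two_mul_card_reducibleResidues_zero hodd
    linarith
  have hsucc : ∀ k, ((reducibleResidues p (k + 1)).card : ℝ) = ((p : ℝ) - 1) ^ 2 / 2 := by
    intro k
    have hcard : 2 * ((reducibleResidues p (k + 1)).card : ℝ) = (p - 1) ^ 2 := by
      exact_mod_cast two_mul_card_reducibleResidues hodd (Nat.succ_ne_zero k)
    linarith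
  have hgeom : HasSum (fun k : ℕ => ((p : ℝ) - 1) ^ 2 / 2 * ((p : ℝ) ^ 4)⁻¹ * (((p : ℝ) ^ 2)⁻¹) ^ k)
      (((p : ℝ) - 1) ^ 2 / 2 * ((p : ℝ) ^ 4)⁻¹ * (1 - ((p : ℝ) ^ 2)⁻¹)⁻¹) :=
    (hasSum_geometric_of_lt_one (by positivity)
      (inv_lt_one_of_one_lt₀ (one_lt_pow₀ hp1 two_ne_zero))).mul_left _
  rw [← hasSum_nat_add_iff' 1]
  convert! hgeom using 1
  · funext k
    rw [hsucc, inv_pow, ← pow_mul, mul_assoc, ← mul_inv]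
    ring
  · have hsq : (p : ℝ) ^ 2 - 1 ≠ 0 := by nlinarith
    rw [Finset.sum_range_one, hzero]
    field_simp
    ring

lemma measureReal_iUnion_reducibleParams (hodd : p ≠ 2) :
    (m.prod (m.prod m)).real (⋃ k, reducibleParams p k) =
      ((p : ℝ) - 1) * (p ^ 2 - p - 1) / (2 * p ^ 2 * (p + 1)) := by
  rw [measureReal_def, measure_iUnion pairwise_disjoint_reducibleParams
    measurableSet_reducibleParams, ENNReal.tsum_toReal_eq fun k => measure_ne_top _ _,
    ← (hasSum_card_reducibleResidues hodd).tsum_eq]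
  exact tsum_congr fun k => measureReal_reducibleParams m k

lemma measure_singleton_zero : m {0} = 0 := by
  have hp : 1 < (p : ℝ) := by exact_mod_cast (Fact.out : p.Prime).one_lt
  have hlim : Filter.Tendsto (fun n : ℕ => ((p : ℝ) ^ n)⁻¹) Filter.atTop (nhds 0) :=
    (tendsto_pow_atTop_atTop_of_one_lt hp).inv_tendsto_atTop
  have hle : m.real {0} ≤ 0 := ge_of_tendsto' hlim fun n => by
    rw [← measureReal_setOf_pow_dvd m n]
    exact measureReal_mono (by simp)
  exact (measureReal_eq_zero_iff).1 (le_antisymm hle measureReal_nonneg)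

lemma measure_setOf_snd_snd_eq_zero :
    (m.prod (m.prod m)) {q | q.2.2 = 0} = 0 := by
  have hset : {q : ℤ_[p] × ℤ_[p] × ℤ_[p] | q.2.2 = 0} = Set.univ ×ˢ (Set.univ ×ˢ {0}) := by
    ext q
    simp
  rw [hset, Measure.prod_prod, Measure.prod_prod, measure_singleton_zero, mul_zero, mul_zero]

lemma measureReal_irreducible (hodd : p ≠ 2) :
    (m.prod (m.prod m)).real {q | q ∈ unitParams p ∧ Irreducible (quartic q)} =
      p * (p - 1) * ((p : ℝ) ^ 2)⁻¹ - (p - 1) * (p ^ 2 - p - 1) / (2 * p ^ 2 * (p + 1)) := by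
  have hae : {q : ℤ_[p] × ℤ_[p] × ℤ_[p] | q ∈ unitParams p ∧ Irreducible (quartic q)}
      =ᵐ[m.prod (m.prod m)] (unitParams p \ ⋃ k, reducibleParams p k : Set _) := by
    have hne : ∀ᵐ q ∂(m.prod (m.prod m)), q.2.2 ≠ 0 := by
      rw [ae_iff]
      simpa using measure_setOf_snd_snd_eq_zero m
    filter_upwards [hne] with q hq
    have := reducible_iff_mem_iUnion hodd hq
    apply propext
    change (q ∈ unitParams p ∧ Irreducible (quartic q)) ↔
      (q ∈ unitParams p ∧ q ∉ ⋃ k, reducibleParams p k)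
    tauto
  rw [measureReal_congr hae, measureReal_sdiff
    (Set.iUnion_subset reducibleParams_subset_unitParams)
    (MeasurableSet.iUnion measurableSet_reducibleParams), measureReal_unitParams,
    measureReal_iUnion_reducibleParams m hodd]

lemma image_unitParams (hodd : p ≠ 2) (P : (Fin 3 → ℤ_[p]) → Prop) :
    (fun q => coeffHom p (shear p q)) ''
        {q | q ∈ unitParams p ∧ P (coeffHom p (shear p q))} =
      {c | ((p : ℤ_[p]) ∣ c 2 ∧ (p : ℤ_[p]) ^ 2 ∣ c 1 ∧
        (p : ℤ_[p]) ^ 2 ∣ c 0 ∧ ¬ (p : ℤ_[p]) ^ 3 ∣ c 0) ∧ P c} := by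
  have hp0 : (p : ℤ_[p]) ≠ 0 := PadicInt.prime_p.ne_zero
  have hunit : ∀ d : ℤ_[p], (p : ℤ_[p]) ^ 3 ∣ p ^ 2 * d ↔ PadicInt.toZMod d = 0 := by
    intro d
    rw [pow_succ, mul_dvd_mul_iff_left (pow_ne_zero 2 hp0), toZMod_eq_zero_iff_dvd]
  ext c
  constructor
  · rintro ⟨q, ⟨hq, hP⟩, rfl⟩
    have hrange : coeffHom p (shear p q) ∈ Set.range (coeffHom p) := ⟨_, rfl⟩
    rw [range_coeffHom hodd] at hrange
    exact ⟨⟨hrange.1, hrange.2.1, hrange.2.2, fun h => hq ((hunit _).mp h)⟩, hP⟩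
  · rintro ⟨⟨h2, h1, h0, h3⟩, hP⟩
    have hc : c ∈ Set.range (coeffHom p) := by
      rw [range_coeffHom hodd]
      exact ⟨h2, h1, h0⟩
    obtain ⟨⟨b, α, d⟩, rfl⟩ := hc
    have hshear : shear p (b, α, d - α ^ 2) = (b, α, d) := by simp [shear]
    refine ⟨(b, α, d - α ^ 2), ⟨?_, by rwa [hshear]⟩, by simp only [hshear]⟩
    simpa [unitParams] using fun h => h3 ((hunit d).mpr h)

end Quartics

/-- Lemma 6 (slope -1/2): for odd `p`, among monic quartics
`x⁴ + c₂x² + c₁x + c₀` with `v_p(c₂) ≥ 1`, `v_p(c₁) ≥ 2`, `v_p(c₀) = 2`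
(Newton polygon a single segment from `(0,2)` to `(4,0)`), the proportion that are
irreducible in `ℤ_p[x]` is `(p² + 3p + 1)/(2p(p + 1))`. -/
theorem stmt_18 (p : ℕ) [Fact p.Prime] (hodd : p ≠ 2)
    (μ : Measure (Fin 3 → ℤ_[p])) [μ.IsAddHaarMeasure] :
    (μ {c : Fin 3 → ℤ_[p] |
        ((p : ℤ_[p]) ∣ c 2 ∧ (p : ℤ_[p]) ^ 2 ∣ c 1 ∧
          (p : ℤ_[p]) ^ 2 ∣ c 0 ∧ ¬ (p : ℤ_[p]) ^ 3 ∣ c 0) ∧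
        Irreducible (X ^ 4 + C (c 2) * X ^ 2 + C (c 1) * X + C (c 0))}).toReal /
      (μ {c : Fin 3 → ℤ_[p] |
        (p : ℤ_[p]) ∣ c 2 ∧ (p : ℤ_[p]) ^ 2 ∣ c 1 ∧
          (p : ℤ_[p]) ^ 2 ∣ c 0 ∧ ¬ (p : ℤ_[p]) ^ 3 ∣ c 0}).toReal =
      ((p : ℝ) ^ 2 + 3 * p + 1) / (2 * p * ((p : ℝ) + 1)) := by
  have hp1 : (1 : ℝ) < p := by exact_mod_cast (Fact.out : p.Prime).one_lt
  let m : Measure ℤ_[p] := Measure.addHaarMeasure ⊤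
  have hm : IsProbabilityMeasure m := ⟨Measure.addHaarMeasure_self⟩
  obtain ⟨κ, hκ, hμ⟩ := exists_measureReal_image_eq hodd μ m
  have hnum := image_unitParams hodd fun c : Fin 3 → ℤ_[p] =>
    Irreducible (X ^ 4 + C (c 2) * X ^ 2 + C (c 1) * X + C (c 0))
  have hden := image_unitParams hodd fun _ : Fin 3 → ℤ_[p] => True
  simp only [and_true] at hden
  rw [← hnum, ← hden, ← measureReal_def, ← measureReal_def, hμ, hμ, mul_div_mul_left _ _ hκ]
  have hirr : (m.prod (m.prod m)).real {q | q ∈ unitParams p ∧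
      Irreducible (X ^ 4 + C (coeffHom p (shear p q) 2) * X ^ 2 +
        C (coeffHom p (shear p q) 1) * X + C (coeffHom p (shear p q) 0))} = _ :=
    measureReal_irreducible m hodd
  have hunit : (m.prod (m.prod m)).real {q | q ∈ unitParams p} = _ := measureReal_unitParams m
  rw [hirr, hunit]
  have hsub : (p : ℝ) - 1 ≠ 0 := by linarith
  field_simp
  ring
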